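/- arXiv:0707.1893 — 2 statements merged into one kernel-verified Lean document; each statement's English description precedes it below -/
import Mathlib

section
/- Let Φ, G : ℝ^{n+1} → ℝ be C² functions and let x ∈ ℝ^{n+1} be a point with Φ(x) = 0, ∇Φ(x) ≠ 0, and G(x) ≠ 0. Define the matrix M(Φ)(x) with entries M_{ab}(Φ)(x) = -∂_a∂_bΦ − ∂_aΦ·∂_bΦ·ΔΦ/‖∇Φ‖² + (∂_aΦ·Σ_d ∂_dΦ·∂_d∂_bΦ + ∂_bΦ·Σ_d ∂_dΦ·∂_d∂_aΦ)/‖∇Φ‖², all evaluated at x. Then M_{ab}(G·Φ)(x) = G(x) · M_{ab}(Φ)(x) for all a, b; that is, M is a matrix-valued dual density on the hypersurface {Φ = 0}. -/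
noncomputable section

/-- The partial derivative `∂ₐΦ(x)`. -/
def pderiv1 {m : ℕ} (Φ : EuclideanSpace ℝ (Fin m) → ℝ)
    (x : EuclideanSpace ℝ (Fin m)) (a : Fin m) : ℝ :=
  fderiv ℝ Φ x (EuclideanSpace.single a 1)

/-- The second partial derivative `∂ₐ∂_bΦ(x)`. -/
def pderiv2 {m : ℕ} (Φ : EuclideanSpace ℝ (Fin m) → ℝ)
    (x : EuclideanSpace ℝ (Fin m)) (a b : Fin m) : ℝ :=
  fderiv ℝ (fun y => fderiv ℝ Φ y (EuclideanSpace.single b 1)) x (EuclideanSpace.single a 1)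

/-- The matrix-valued dual density
`M_{ab}(Φ) = -∂ₐ∂_bΦ − ∂ₐΦ∂_bΦ·ΔΦ/‖∇Φ‖² + (∂ₐΦ·Σ_d ∂_dΦ∂_d∂_bΦ + ∂_bΦ·Σ_d ∂_dΦ∂_d∂ₐΦ)/‖∇Φ‖²`. -/
def Mmat {m : ℕ} (Φ : EuclideanSpace ℝ (Fin m) → ℝ)
    (x : EuclideanSpace ℝ (Fin m)) : Matrix (Fin m) (Fin m) ℝ :=
  Matrix.of fun a b =>
    -pderiv2 Φ x a b
      - pderiv1 Φ x a * pderiv1 Φ x b * (∑ d, pderiv2 Φ x d d) /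
          (∑ c, (pderiv1 Φ x c) ^ 2)
      + (pderiv1 Φ x a * (∑ d, pderiv1 Φ x d * pderiv2 Φ x d b) +
          pderiv1 Φ x b * (∑ d, pderiv1 Φ x d * pderiv2 Φ x d a)) /
          (∑ c, (pderiv1 Φ x c) ^ 2)

/-!
At a zero of `Φ`, writing `v = ∇Φ`, `w = ∇G` and `H` for the Hessian of `Φ`, the Leibniz rule gives
`∇(GΦ) = G v` and `Hess (GΦ) = G H + v wᵀ + w vᵀ`. As a function of a gradient and a Hessian, `M`
is linear in the Hessian, homogeneous of degree zero in the gradient, and kills every symmetric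
product `v wᵀ + w vᵀ` containing the gradient; hence only the term `G H` survives.
-/

section Algebra

open Matrix

variable {ι K : Type*} [Fintype ι] [Field K]

/-- The expression `M` as a function of a vector `v` and a matrix `A`, which stand for the gradient
and the Hessian of `Φ`, so that its algebraic properties can be separated from the calculus. It is
bundled as a linear map in `A`. For real `v ≠ 0` and symmetric `A` its value is
`-P A P - tr (P A P) • v vᵀ / (v ⬝ᵥ v)`, with `P` the orthogonal projection onto `vᗮ`. -/
def dualDensity (v : ι → K) : Matrix ι ι K →ₗ[K] Matrix ι ι K where
  toFun A := -A - (A.trace / (v ⬝ᵥ v)) • vecMulVec v v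
    + (v ⬝ᵥ v)⁻¹ • (vecMulVec v (v ᵥ* A) + vecMulVec (v ᵥ* A) v)
  map_add' A B := by
    rw [trace_add, vecMul_add, vecMulVec_add, add_vecMulVec, add_div]
    module
  map_smul' c A := by
    rw [trace_smul, vecMul_smul, vecMulVec_smul, smul_vecMulVec, smul_eq_mul, mul_div_assoc,
      RingHom.id_apply]
    module

theorem dualDensity_apply (v : ι → K) (A : Matrix ι ι K) :
    dualDensity v A = -A - (A.trace / (v ⬝ᵥ v)) • vecMulVec v v
      + (v ⬝ᵥ v)⁻¹ • (vecMulVec v (v ᵥ* A) + vecMulVec (v ᵥ* A) v) :=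
  rfl

theorem dualDensity_smul_left {c : K} (hc : c ≠ 0) (v : ι → K) :
    dualDensity (c • v) = dualDensity v := by
  ext1 A
  simp only [dualDensity_apply, smul_dotProduct, dotProduct_smul, smul_vecMul, smul_vecMulVec,
    vecMulVec_smul, smul_eq_mul]
  match_scalars <;> field_simp

theorem dualDensity_vecMulVec_add_vecMulVec {v : ι → K} (hv : v ⬝ᵥ v ≠ 0) (w : ι → K) :
    dualDensity v (vecMulVec v w + vecMulVec w v) = 0 := by
  have htrace : (vecMulVec v w + vecMulVec w v).trace = 2 * (v ⬝ᵥ w) := by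
    rw [trace_add, trace_vecMulVec, trace_vecMulVec, dotProduct_comm w v, two_mul]
  have hvecMul : v ᵥ* (vecMulVec v w + vecMulVec w v) = (v ⬝ᵥ v) • w + (v ⬝ᵥ w) • v := by
    rw [vecMul_add, vecMul_vecMulVec, vecMul_vecMulVec]
  rw [dualDensity_apply, htrace, hvecMul, vecMulVec_add, add_vecMulVec]
  simp only [smul_vecMulVec, vecMulVec_smul]
  match_scalars <;> field_simp <;> ring

end Algebra

section Calculus

open Matrix

variable {m : ℕ} {Φ G : EuclideanSpace ℝ (Fin m) → ℝ} {x : EuclideanSpace ℝ (Fin m)}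

theorem gradient_eq_toLp_pderiv1 (Φ : EuclideanSpace ℝ (Fin m) → ℝ)
    (x : EuclideanSpace ℝ (Fin m)) : gradient Φ x = WithLp.toLp 2 (pderiv1 Φ x) := by
  ext a
  calc gradient Φ x a = inner ℝ (gradient Φ x) (EuclideanSpace.single a 1) := by
        simp [EuclideanSpace.inner_single_right, -inner_gradient_left]
    _ = pderiv1 Φ x a := inner_gradient_left

theorem pderiv1_fun_add (hΦ : DifferentiableAt ℝ Φ x) (hG : DifferentiableAt ℝ G x) (a : Fin m) :
    pderiv1 (fun y => Φ y + G y) x a = pderiv1 Φ x a + pderiv1 G x a := by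
  simp only [pderiv1, fderiv_fun_add hΦ hG, _root_.add_apply]

theorem pderiv1_fun_mul (hG : DifferentiableAt ℝ G x) (hΦ : DifferentiableAt ℝ Φ x) (a : Fin m) :
    pderiv1 (fun y => G y * Φ y) x a = G x * pderiv1 Φ x a + Φ x * pderiv1 G x a := by
  simp only [pderiv1, fderiv_fun_mul hG hΦ, _root_.add_apply, _root_.smul_apply,
    smul_eq_mul]

theorem differentiableAt_pderiv1 (hΦ : ContDiffAt ℝ 2 Φ x) (a : Fin m) :
    DifferentiableAt ℝ (fun y => pderiv1 Φ y a) x :=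
  ((hΦ.fderiv_right_succ (n := 1)).differentiableAt one_ne_zero).clm_apply
    (differentiableAt_const _)

theorem pderiv2_eq_pderiv1_pderiv1 (Φ : EuclideanSpace ℝ (Fin m) → ℝ)
    (x : EuclideanSpace ℝ (Fin m)) (a b : Fin m) :
    pderiv2 Φ x a b = pderiv1 (fun y => pderiv1 Φ y b) x a :=
  rfl

theorem pderiv2_fun_mul (hG : ContDiffAt ℝ 2 G x) (hΦ : ContDiffAt ℝ 2 Φ x) (a b : Fin m) :
    pderiv2 (fun y => G y * Φ y) x a b =
      G x * pderiv2 Φ x a b + pderiv1 Φ x a * pderiv1 G x b + pderiv1 G x a * pderiv1 Φ x b +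
        Φ x * pderiv2 G x a b := by
  have hleibniz : (fun y => pderiv1 (fun z => G z * Φ z) y b) =ᶠ[nhds x]
      fun y => G y * pderiv1 Φ y b + Φ y * pderiv1 G y b := by
    filter_upwards [hG.eventually (by simp), hΦ.eventually (by simp)] with y hGy hΦy
    exact pderiv1_fun_mul (hGy.differentiableAt two_ne_zero) (hΦy.differentiableAt two_ne_zero) b
  have hG₁ := hG.differentiableAt two_ne_zero
  have hΦ₁ := hΦ.differentiableAt two_ne_zero
  have hG₂ := differentiableAt_pderiv1 hG b
  have hΦ₂ := differentiableAt_pderiv1 hΦ b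
  simp only [pderiv2_eq_pderiv1_pderiv1]
  rw [pderiv1, hleibniz.fderiv_eq, ← pderiv1, pderiv1_fun_add (hG₁.fun_mul hΦ₂) (hΦ₁.fun_mul hG₂),
    pderiv1_fun_mul hG₁ hΦ₂, pderiv1_fun_mul hΦ₁ hG₂]
  ring

/-- The Hessian matrix of second partial derivatives of `Φ` at `x`, in the index order of
`pderiv2`. -/
def hessianMatrix (Φ : EuclideanSpace ℝ (Fin m) → ℝ) (x : EuclideanSpace ℝ (Fin m)) :
    Matrix (Fin m) (Fin m) ℝ :=
  Matrix.of (pderiv2 Φ x)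

theorem Mmat_eq_dualDensity (Φ : EuclideanSpace ℝ (Fin m) → ℝ) (x : EuclideanSpace ℝ (Fin m)) :
    Mmat Φ x = dualDensity (pderiv1 Φ x) (hessianMatrix Φ x) := by
  ext a b
  simp only [Mmat, dualDensity_apply, hessianMatrix, trace, diag_apply, dotProduct, vecMul,
    vecMulVec_apply, of_apply, Matrix.add_apply, Matrix.sub_apply, Matrix.neg_apply,
    Matrix.smul_apply, smul_eq_mul, pow_two]
  ring

theorem pderiv1_fun_mul_of_eq_zero (hG : DifferentiableAt ℝ G x) (hΦ : DifferentiableAt ℝ Φ x)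
    (hx : Φ x = 0) : pderiv1 (fun y => G y * Φ y) x = G x • pderiv1 Φ x := by
  ext a
  rw [pderiv1_fun_mul hG hΦ, hx, zero_mul, add_zero, Pi.smul_apply, smul_eq_mul]

theorem hessianMatrix_fun_mul_of_eq_zero (hG : ContDiffAt ℝ 2 G x) (hΦ : ContDiffAt ℝ 2 Φ x)
    (hx : Φ x = 0) :
    hessianMatrix (fun y => G y * Φ y) x = G x • hessianMatrix Φ x +
      (vecMulVec (pderiv1 Φ x) (pderiv1 G x) + vecMulVec (pderiv1 G x) (pderiv1 Φ x)) := by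
  ext a b
  simp only [hessianMatrix, of_apply, Matrix.add_apply, Matrix.smul_apply, vecMulVec_apply,
    smul_eq_mul, pderiv2_fun_mul hG hΦ, hx]
  ring

theorem stmt4_general (hΦ : ContDiffAt ℝ 2 Φ x) (hG : ContDiffAt ℝ 2 G x) (hx : Φ x = 0)
    (hgrad : gradient Φ x ≠ 0) (hGx : G x ≠ 0) :
    Mmat (fun y => G y * Φ y) x = G x • Mmat Φ x := by
  have hv : pderiv1 Φ x ⬝ᵥ pderiv1 Φ x ≠ 0 := by
    rwa [Ne, dotProduct_self_eq_zero, ← WithLp.toLp_eq_zero 2, ← gradient_eq_toLp_pderiv1]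
  have hG₁ := hG.differentiableAt two_ne_zero
  have hΦ₁ := hΦ.differentiableAt two_ne_zero
  rw [Mmat_eq_dualDensity, Mmat_eq_dualDensity, pderiv1_fun_mul_of_eq_zero hG₁ hΦ₁ hx,
    hessianMatrix_fun_mul_of_eq_zero hG hΦ hx, dualDensity_smul_left hGx, map_add, map_smul,
    dualDensity_vecMulVec_add_vecMulVec hv, add_zero]

end Calculus

/-- For C² functions `Φ G : ℝ^{n+1} → ℝ` and a point `x` with `Φ x = 0`,
`∇Φ(x) ≠ 0` and `G x ≠ 0`, the matrix `M` is a matrix-valued dual density: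
`M_{ab}(G·Φ)(x) = G(x) · M_{ab}(Φ)(x)` for all `a, b`. -/
theorem stmt4 (n : ℕ) (Φ G : EuclideanSpace ℝ (Fin (n + 1)) → ℝ)
    (hΦ : ContDiff ℝ 2 Φ) (hG : ContDiff ℝ 2 G)
    (x : EuclideanSpace ℝ (Fin (n + 1))) (hx : Φ x = 0)
    (hgrad : gradient Φ x ≠ 0) (hGx : G x ≠ 0) :
    ∀ a b, Mmat (fun y => G y * Φ y) x a b = G x * Mmat Φ x a b := fun a b =>
  congrFun₂ (stmt4_general hΦ.contDiffAt hG.contDiffAt hx hgrad hGx) a b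
end
end

section
/- Let K be a field and let (E•, d) be a cochain complex of finite-dimensional K-vector spaces indexed by the natural numbers, with E^i = 0 for all sufficiently large i. Let A• be an endomorphism of the complex, i.e. linear maps A_i : E^i → E^i with A_{i+1} ∘ d_i = d_i ∘ A_i for all i. Let H^i denote the i-th cohomology ker(d_i)/range(d_{i-1}) and let A induce operators Â_i on H^i. Then in the field of rational functions K(t): ∏_i det(1 + t·A_i)^{(-1)^i} = ∏_i det(1 + t·Â_i)^{(-1)^i}, both products being finite. -/
/-!
The characteristic function is multiplicative on short exact sequences, because base change to
`K[t]` is exact and determinants are multiplicative on short exact sequences of free modules. It is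
also nonzero, being the reversal of the characteristic polynomial of `-A`. Writing `Zⁱ` and `Bⁱ`
for the cocycles and coboundaries, the sequences `0 → Zⁱ → Eⁱ → Bⁱ⁺¹ → 0` and
`0 → Bⁱ → Zⁱ → Hⁱ → 0` split the factor of `Eⁱ` into those of `Bⁱ`, `Hⁱ` and `Bⁱ⁺¹`, and in the
alternating product the coboundary factors cancel in pairs.
-/

open LinearMap Submodule Polynomial

noncomputable section

/-- The characteristic function `det(1 + t·A)` of a linear operator `A` on a
finite-dimensional `K`-vector space, regarded as an element of the field of rational
functions `K(t)`: it is the determinant, over the polynomial ring `K[t]`, of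
`1 + t·A` acting on the base change `K[t] ⊗ V`, mapped into `K(t)`. -/
def charFun {K V : Type*} [Field K] [AddCommGroup V] [Module K V]
    [FiniteDimensional K V] (A : V →ₗ[K] V) : RatFunc K :=
  algebraMap (Polynomial K) (RatFunc K)
    (LinearMap.det (1 + (Polynomial.X : Polynomial K) • A.baseChange (Polynomial K)))

/-- The subspace of `i`-coboundaries of a cochain complex
`E⁰ → E¹ → E² → ⋯` (indexed by `ℕ`): `⊥` for `i = 0` and `range (d (i-1))` otherwise. -/
def coboundaries {K : Type*} [Field K] (E : ℕ → Type*)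
    [∀ i, AddCommGroup (E i)] [∀ i, Module K (E i)]
    (d : ∀ i, E i →ₗ[K] E (i + 1)) : ∀ i, Submodule K (E i)
  | 0 => ⊥
  | (i + 1) => range (d i)

section Intertwining

variable {R M N : Type*} [Semiring R] [AddCommMonoid M] [Module R M] [AddCommMonoid N] [Module R N]
  {f : M →ₗ[R] N} {A : M →ₗ[R] M} {B : N →ₗ[R] N}

theorem map_mem_ker (h : B ∘ₗ f = f ∘ₗ A) : ∀ x ∈ ker f, A x ∈ ker f := by
  intro x hx
  rw [mem_ker, ← LinearMap.comp_apply, ← h, LinearMap.comp_apply, mem_ker.mp hx, map_zero]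

theorem map_mem_range (h : B ∘ₗ f = f ∘ₗ A) : ∀ y ∈ range f, B y ∈ range f := by
  rintro _ ⟨x, rfl⟩
  exact ⟨A x, (LinearMap.congr_fun h x).symm⟩

end Intertwining

section Determinant

variable {R M M' M'' : Type*} [CommRing R] [AddCommGroup M] [Module R M]
  [AddCommGroup M'] [Module R M'] [AddCommGroup M''] [Module R M'']

theorem det_eq_of_equiv_comp_eq {f : M →ₗ[R] M} {f' : M' →ₗ[R] M'} (e : M ≃ₗ[R] M')
    (h : e.toLinearMap ∘ₗ f = f' ∘ₗ e.toLinearMap) : LinearMap.det f = LinearMap.det f' := by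
  rw [← LinearMap.det_conj f e, ← LinearMap.comp_assoc, h, LinearMap.comp_assoc,
    LinearEquiv.comp_symm, LinearMap.comp_id]

theorem det_eq_mul_of_exact [Module.Free R M'] [Module.Finite R M'] [Module.Free R M'']
    [Module.Finite R M''] {i : M' →ₗ[R] M} {p : M →ₗ[R] M''} (hi : Function.Injective i)
    (hp : Function.Surjective p) (hip : Function.Exact i p) {f' : M' →ₗ[R] M'} {f : M →ₗ[R] M}
    {f'' : M'' →ₗ[R] M''} (hf' : i ∘ₗ f' = f ∘ₗ i) (hf'' : p ∘ₗ f = f'' ∘ₗ p) :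
    LinearMap.det f = LinearMap.det f' * LinearMap.det f'' := by
  have : Module.Finite R M := .of_exact hip hp
  let eRange := LinearEquiv.ofInjective i hi
  let eQuot := hip.linearEquivOfSurjective hp
  have : Module.Free R (range i) := .of_equiv eRange
  have : Module.Free R (M ⧸ range i) := .of_equiv eQuot.symm
  have hrange : range i ≤ (range i).comap f := map_mem_range hf'.symm
  have hdet' : LinearMap.det f' = LinearMap.det (f.restrict hrange) :=
    det_eq_of_equiv_comp_eq eRange (LinearMap.ext fun x => Subtype.ext (LinearMap.congr_fun hf' x))
  have hdet'' : LinearMap.det ((range i).mapQ (range i) f hrange) = LinearMap.det f'' :=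
    det_eq_of_equiv_comp_eq eQuot (linearMap_qext _ hf'')
  rw [LinearMap.det_eq_det_mul_det (range i) f hrange, hdet', hdet'']

end Determinant

theorem comp_one_add_smul_baseChange {R S M N : Type*} [CommSemiring R] [CommSemiring S]
    [Algebra R S] [AddCommMonoid M] [Module R M] [AddCommMonoid N] [Module R N] {f : M →ₗ[R] N}
    {A : M →ₗ[R] M} {B : N →ₗ[R] N} (h : f ∘ₗ A = B ∘ₗ f) (s : S) :
    f.baseChange S ∘ₗ (1 + s • A.baseChange S) = (1 + s • B.baseChange S) ∘ₗ f.baseChange S := by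
  rw [LinearMap.comp_add, LinearMap.add_comp, LinearMap.comp_smul, LinearMap.smul_comp,
    ← LinearMap.baseChange_comp, ← LinearMap.baseChange_comp, h]
  rfl

section CharFun

variable {K U V W : Type*} [Field K] [AddCommGroup U] [Module K U] [AddCommGroup V] [Module K V]
  [AddCommGroup W] [Module K W]

theorem charFun_eq_reverse_charpoly [FiniteDimensional K V] (A : V →ₗ[K] V) :
    charFun A = algebraMap K[X] (RatFunc K) (-A).charpoly.reverse := by
  let b := Module.finBasis K V
  rw [charFun, ← LinearMap.det_toMatrix (Algebra.TensorProduct.basis K[X] b),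
    ← (-A).charpoly_toMatrix b, Matrix.reverse_charpoly, Matrix.charpolyRev, map_add, map_smul,
    LinearMap.toMatrix_baseChange, LinearMap.toMatrix_one, map_neg, Matrix.map_neg _ (map_neg C),
    smul_neg, sub_neg_eq_add]
  rfl

theorem charFun_ne_zero [FiniteDimensional K V] (A : V →ₗ[K] V) : charFun A ≠ 0 := by
  rw [charFun_eq_reverse_charpoly]
  exact RatFunc.algebraMap_ne_zero (mt reverse_eq_zero.mp (-A).charpoly_monic.ne_zero)

theorem charFun_of_subsingleton [Subsingleton V] (A : V →ₗ[K] V) : charFun A = 1 := by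
  rw [charFun, LinearMap.det_eq_one_of_subsingleton, map_one]

theorem charFun_eq_mul_of_exact [FiniteDimensional K U] [FiniteDimensional K V]
    [FiniteDimensional K W] {i : U →ₗ[K] V} {p : V →ₗ[K] W} (hi : Function.Injective i)
    (hp : Function.Surjective p) (hip : Function.Exact i p) {A' : U →ₗ[K] U} {A : V →ₗ[K] V}
    {A'' : W →ₗ[K] W} (hA' : i ∘ₗ A' = A ∘ₗ i) (hA'' : p ∘ₗ A = A'' ∘ₗ p) :
    charFun A = charFun A' * charFun A'' := by
  rw [charFun, charFun, charFun, ← map_mul]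
  congr 1
  exact det_eq_mul_of_exact (i := i.baseChange K[X]) (p := p.baseChange K[X])
    (Module.Flat.lTensor_preserves_injective_linearMap i hi) (LinearMap.lTensor_surjective _ hp)
    (lTensor_exact _ hip hp) (comp_one_add_smul_baseChange hA' X)
    (comp_one_add_smul_baseChange hA'' X)

theorem charFun_restrict_eq_mul_mapQ [FiniteDimensional K V] {A : V →ₗ[K] V} {P Q : Submodule K V}
    (hPQ : P ≤ Q) (hP : ∀ x ∈ P, A x ∈ P) (hQ : ∀ x ∈ Q, A x ∈ Q) :
    charFun (A.restrict hQ) = charFun (A.restrict hP) *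
      charFun ((P.comap Q.subtype).mapQ (P.comap Q.subtype) (A.restrict hQ) fun x => hP x) :=
  charFun_eq_mul_of_exact (inclusion_injective hPQ) (mkQ_surjective _)
    (LinearMap.exact_iff.mpr (by rw [ker_mkQ, range_inclusion])) rfl rfl

theorem charFun_eq_ker_mul_range [FiniteDimensional K V] {f : V →ₗ[K] W} {A : V →ₗ[K] V}
    {B : W →ₗ[K] W} (h : B ∘ₗ f = f ∘ₗ A) :
    charFun A = charFun (A.restrict (map_mem_ker h)) * charFun (B.restrict (map_mem_range h)) :=
  charFun_eq_mul_of_exact (i := (ker f).subtype) (p := f.rangeRestrict) (injective_subtype _)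
    f.surjective_rangeRestrict (LinearMap.exact_iff.mpr (by rw [ker_rangeRestrict, range_subtype]))
    rfl (LinearMap.ext fun x => Subtype.ext (LinearMap.congr_fun h x).symm)

end CharFun

theorem prod_zpow_neg_one_pow_mul_eq {G : Type*} [CommGroupWithZero G] {a b c : ℕ → G}
    (hb : ∀ i, b i ≠ 0) (habc : ∀ i, a i = b i * c i * b (i + 1)) (M : ℕ) :
    (∏ i ∈ Finset.range M, a i ^ ((-1 : ℤ) ^ i)) * b M ^ ((-1 : ℤ) ^ M) =
      b 0 * ∏ i ∈ Finset.range M, c i ^ ((-1 : ℤ) ^ i) := by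
  induction M with
  | zero => simp
  | succ M ih =>
    have hcancel : a M ^ ((-1 : ℤ) ^ M) * b (M + 1) ^ ((-1 : ℤ) ^ (M + 1)) =
        b M ^ ((-1 : ℤ) ^ M) * c M ^ ((-1 : ℤ) ^ M) := by
      rw [habc, mul_zpow, mul_zpow, pow_succ, mul_neg_one, zpow_neg,
        mul_inv_cancel_right₀ (zpow_ne_zero _ (hb (M + 1)))]
    rw [Finset.prod_range_succ, Finset.prod_range_succ, mul_assoc, hcancel, ← mul_assoc, ih,
      mul_assoc]

section Complex

variable {K : Type*} [Field K] {E : ℕ → Type*} [∀ i, AddCommGroup (E i)] [∀ i, Module K (E i)]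
  {d : ∀ i, E i →ₗ[K] E (i + 1)} {A : ∀ i, E i →ₗ[K] E i}

theorem coboundaries_le_ker (hdd : ∀ i, d (i + 1) ∘ₗ d i = 0) :
    ∀ i, coboundaries E d i ≤ ker (d i)
  | 0 => bot_le
  | i + 1 => range_le_ker_iff.mpr (hdd i)

theorem map_mem_coboundaries (hA : ∀ i, A (i + 1) ∘ₗ d i = d i ∘ₗ A i) :
    ∀ i, ∀ x ∈ coboundaries E d i, A i x ∈ coboundaries E d i
  | 0 => fun _ hx => (mem_bot K).mpr (by rw [(mem_bot K).mp hx, map_zero])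
  | i + 1 => map_mem_range (hA i)

/-- The operator `Âᵢ` that an endomorphism `A` of the complex induces on `Hⁱ`, where `Hⁱ` is encoded
as the quotient of `ker (d i)` by the preimage in it of the coboundaries. -/
def cohomologyMap (hA : ∀ i, A (i + 1) ∘ₗ d i = d i ∘ₗ A i) (i : ℕ) :
    (ker (d i) ⧸ (coboundaries E d i).comap (ker (d i)).subtype) →ₗ[K]
      ker (d i) ⧸ (coboundaries E d i).comap (ker (d i)).subtype :=
  mapQ _ _ ((A i).restrict (map_mem_ker (hA i))) fun x => map_mem_coboundaries hA i x

variable [∀ i, FiniteDimensional K (E i)]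

theorem charFun_eq_coboundaries_mul_cohomology_mul_coboundaries
    (hdd : ∀ i, d (i + 1) ∘ₗ d i = 0) (hA : ∀ i, A (i + 1) ∘ₗ d i = d i ∘ₗ A i) (i : ℕ) :
    charFun (A i) = charFun ((A i).restrict (map_mem_coboundaries hA i)) *
      charFun (cohomologyMap hA i) *
      charFun ((A (i + 1)).restrict (map_mem_coboundaries hA (i + 1))) := by
  have hker : charFun ((A i).restrict (map_mem_ker (hA i))) =
      charFun ((A i).restrict (map_mem_coboundaries hA i)) * charFun (cohomologyMap hA i) :=
    charFun_restrict_eq_mul_mapQ (coboundaries_le_ker hdd i) _ _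
  rw [← hker]
  exact charFun_eq_ker_mul_range (hA i)

theorem stmt14_general (hdd : ∀ i, d (i + 1) ∘ₗ d i = 0)
    (hA : ∀ i, A (i + 1) ∘ₗ d i = d i ∘ₗ A i) (M : ℕ) :
    (∏ i ∈ Finset.range M, charFun (A i) ^ ((-1 : ℤ) ^ i)) *
        charFun ((A M).restrict (map_mem_coboundaries hA M)) ^ ((-1 : ℤ) ^ M) =
      ∏ i ∈ Finset.range M, charFun (cohomologyMap hA i) ^ ((-1 : ℤ) ^ i) := by
  have : Subsingleton (coboundaries E d 0) := inferInstanceAs (Subsingleton (⊥ : Submodule K (E 0)))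
  rw [prod_zpow_neg_one_pow_mul_eq (fun _ => charFun_ne_zero _)
    (charFun_eq_coboundaries_mul_cohomology_mul_coboundaries hdd hA) M,
    charFun_of_subsingleton, one_mul]

end Complex

/-- Let `(E•, d)` be a cochain complex of finite-dimensional `K`-vector
spaces indexed by `ℕ`, with `E^i = 0` for all `i ≥ N`, and let `A•` be an endomorphism
of the complex. With `H^i = ker (d i) ⧸ coboundaries i` the `i`-th cohomology and `Â_i`
the induced operators, the alternating products of characteristic functions in `K(t)`
agree: `∏ᵢ det(1 + t·A_i)^{(-1)^i} = ∏ᵢ det(1 + t·Â_i)^{(-1)^i}` (finite products). -/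
theorem stmt14 {K : Type*} [Field K] (E : ℕ → Type*)
    [∀ i, AddCommGroup (E i)] [∀ i, Module K (E i)] [∀ i, FiniteDimensional K (E i)]
    (d : ∀ i, E i →ₗ[K] E (i + 1)) (hdd : ∀ i, d (i + 1) ∘ₗ d i = 0)
    (A : ∀ i, E i →ₗ[K] E i) (hA : ∀ i, A (i + 1) ∘ₗ d i = d i ∘ₗ A i)
    (N : ℕ) (hN : ∀ i, N ≤ i → Subsingleton (E i)) :
    ∃ (hZ : ∀ i, ∀ x ∈ ker (d i), A i x ∈ ker (d i))
      (hq : ∀ i, (coboundaries E d i).comap (ker (d i)).subtype ≤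
          ((coboundaries E d i).comap (ker (d i)).subtype).comap
            ((A i).restrict (hZ i))),
      ∀ M : ℕ, N ≤ M →
        ∏ i ∈ Finset.range M, charFun (A i) ^ ((-1 : ℤ) ^ i) =
          ∏ i ∈ Finset.range M,
            charFun (Submodule.mapQ
              ((coboundaries E d i).comap (ker (d i)).subtype)
              ((coboundaries E d i).comap (ker (d i)).subtype)
              ((A i).restrict (hZ i)) (hq i)) ^ ((-1 : ℤ) ^ i) := by
  refine ⟨fun i => map_mem_ker (hA i), fun i x => map_mem_coboundaries hA i x, fun M hM => ?_⟩
  have := hN M hM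
  simpa only [charFun_of_subsingleton, one_zpow, mul_one] using! stmt14_general hdd hA M
end
end
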